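/- (Existence, monotonicity and convergence for the discretised maximisation programs.) Under Assumption (A), fix finite nonnegative Borel measures μ_1, μ_2, … on [2b(0),∞), let U_n (n ∈ ℕ) be the cone of measures Σ_{i=1}^n a_i μ_i with a_i ≥ 0, and let U_∞ be the closure of ∪_n U_n in the vague topology. For n ∈ ℕ ∪ {∞} let d_{1,n} := sup{ ∫ g dμ : μ ∈ U_n and r_μ(t,b(t)) ≤ 1 for all t ∈ (0,t0] }, and assume there exists C > 0 such that r_{C·μ_1}(t,b(t)) ≤ 1 for all t ∈ (0,t0]. Then: (a) for every n ∈ ℕ ∪ {∞} the supremum d_{1,n} is attained by a feasible μ*_{1,n} ∈ U_n, and d_{1,m} ≤ d_{1,n} ≤ 1 for m ≤ n; (b) there exist a strictly increasing sequence (n_k) and a measure ν_∞ ∈ U_∞ with r_{ν_∞}(t,b(t)) ≤ 1 for all t ∈ (0,t0], such that μ*_{1,n_k} → ν_∞ vaguely and d_{1,∞} ≥ ∫ g dν_∞ ≥ sup_{n∈ℕ} d_{1,n} = lim_{n→∞} d_{1,n}. -/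

import Mathlib

open MeasureTheory Set Filter
open scoped ENNReal NNReal Topology

noncomputable def rTheta (θ t x : ℝ) : ℝ := Real.exp (-θ ^ 2 / (2 * t) + θ * x / t)

noncomputable def rMu (μ : Measure ℝ) (t x : ℝ) : ℝ≥0∞ :=
  ∫⁻ θ, ENNReal.ofReal (rTheta θ t x) ∂μ

/-- The positive cone `U_n` generated by the measures `μ_1 = μs 0, …, μ_n = μs (n-1)`. -/
def coneU (μs : ℕ → Measure ℝ) (n : ℕ) : Set (Measure ℝ) :=
  {μ | ∃ a : ℕ → ℝ≥0, μ = ∑ i ∈ Finset.range n, a i • μs i}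

/-- The vague topology on measures on `ℝ`: the coarsest topology making
`μ ↦ ∫ f dμ` continuous for every continuous compactly supported `f`. -/
noncomputable def vagueTop : TopologicalSpace (Measure ℝ) :=
  ⨅ (f : ℝ → ℝ) (_ : Continuous f) (_ : HasCompactSupport f),
    TopologicalSpace.induced (fun μ : Measure ℝ => ∫ x, f x ∂μ) inferInstance

/-- `U_∞`: the vague closure of `⋃ n, U_n`. -/
noncomputable def coneUInf (μs : ℕ → Measure ℝ) : Set (Measure ℝ) :=
  @closure _ vagueTop (⋃ n, coneU μs n)

/-- Feasible measures of the maximisation program restricted to `U`. -/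
def dFeasSet (b : ℝ → ℝ) (t0 : ℝ) (U : Set (Measure ℝ)) : Set (Measure ℝ) :=
  {μ ∈ U | ∀ t ∈ Set.Ioc 0 t0, rMu μ t (b t) ≤ 1}

/-- The objective `∫ g dμ` with `g θ = r_θ(t0, x0)`. -/
noncomputable def gInt (t0 x0 : ℝ) (μ : Measure ℝ) : ℝ≥0∞ :=
  ∫⁻ θ, ENNReal.ofReal (rTheta θ t0 x0) ∂μ

/-- The optimal value `d_{1,·}` of the maximisation program restricted to `U`. -/
noncomputable def dVal (b : ℝ → ℝ) (t0 x0 : ℝ) (U : Set (Measure ℝ)) : ℝ≥0∞ :=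
  ⨆ μ ∈ dFeasSet b t0 U, gInt t0 x0 μ

/-- Vague convergence of a sequence of measures on `ℝ`. -/
def VagueTendsto (μn : ℕ → Measure ℝ) (μ : Measure ℝ) : Prop :=
  ∀ f : ℝ → ℝ, Continuous f → HasCompactSupport f →
    Tendsto (fun n => ∫ x, f x ∂(μn n)) atTop (𝓝 (∫ x, f x ∂μ))

lemma aux_rTheta_pos (θ t x : ℝ) : 0 < rTheta θ t x := Real.exp_pos _

lemma aux_rTheta_cont (t x : ℝ) : Continuous (fun θ => rTheta θ t x) := by
  unfold rTheta
  fun_prop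

lemma aux_R_meas (t x : ℝ) : Measurable (fun θ => ENNReal.ofReal (rTheta θ t x)) :=
  (aux_rTheta_cont t x).measurable.ennreal_ofReal

/-- For nonnegative `θ`, `g` is dominated by the constraint function. -/
lemma aux_g_eq (t x B θ : ℝ) :
    rTheta θ t x = Real.exp (-(θ * ((B - x) / t))) * rTheta θ t B := by
  unfold rTheta
  rw [← Real.exp_add]
  congr 1
  ring

lemma aux_g_le {t x B : ℝ} (ht : 0 < t) (hx : x < B) {N θ : ℝ} (h : N ≤ θ) :
    ENNReal.ofReal (rTheta θ t x) ≤
      ENNReal.ofReal (Real.exp (-(N * ((B - x) / t)))) * ENNReal.ofReal (rTheta θ t B) := by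
  rw [← ENNReal.ofReal_mul (Real.exp_pos _).le]
  apply ENNReal.ofReal_le_ofReal
  rw [aux_g_eq t x B θ]
  have : 0 < (B - x) / t := div_pos (by linarith) ht
  have := aux_rTheta_pos θ t B
  gcongr

lemma aux_setlint {t x B : ℝ} (ht : 0 < t) (hx : x < B) {μ : Measure ℝ}
    (hR : rMu μ t B ≤ 1) (N : ℝ) (S : Set ℝ) (hS : ∀ θ ∈ S, N ≤ θ) (hSm : MeasurableSet S) :
    ∫⁻ θ in S, ENNReal.ofReal (rTheta θ t x) ∂μ ≤
      ENNReal.ofReal (Real.exp (-(N * ((B - x) / t)))) := by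
  calc ∫⁻ θ in S, ENNReal.ofReal (rTheta θ t x) ∂μ
      ≤ ∫⁻ θ in S, ENNReal.ofReal (Real.exp (-(N * ((B - x) / t)))) *
          ENNReal.ofReal (rTheta θ t B) ∂μ :=
        setLIntegral_mono' hSm (fun θ hθ => aux_g_le ht hx (hS θ hθ))
    _ ≤ ∫⁻ θ, ENNReal.ofReal (Real.exp (-(N * ((B - x) / t)))) *
          ENNReal.ofReal (rTheta θ t B) ∂μ := setLIntegral_le_lintegral _ _
    _ = ENNReal.ofReal (Real.exp (-(N * ((B - x) / t)))) * rMu μ t B := by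
        rw [lintegral_const_mul _ (aux_R_meas t B)]; rfl
    _ ≤ ENNReal.ofReal (Real.exp (-(N * ((B - x) / t)))) * 1 := by gcongr
    _ = _ := mul_one _

lemma aux_gInt_le {t x B : ℝ} (ht : 0 < t) (hx : x < B) {μ : Measure ℝ}
    (hs : μ (Iio 0) = 0) (hR : rMu μ t B ≤ 1) : gInt t x μ ≤ 1 := by
  have h := aux_setlint ht hx hR 0 (Ici 0) (fun θ h => h) measurableSet_Ici
  have h2 : μ.restrict (Ici 0) = μ := by
    apply Measure.restrict_eq_self_of_ae_mem
    rw [ae_iff]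
    convert hs using 2
    ext; simp
  rw [h2] at h
  simpa [gInt] using h

/-- cut-off function -/
noncomputable def auxChi (θ : ℝ) : ℝ := min 1 (max 0 (θ + 1))

lemma aux_chi_cont : Continuous auxChi := by unfold auxChi; fun_prop
lemma aux_chi_nonneg (θ : ℝ) : 0 ≤ auxChi θ := by unfold auxChi; positivity
lemma aux_chi_le (θ : ℝ) : auxChi θ ≤ 1 := min_le_left _ _
lemma aux_chi_one {θ : ℝ} (h : 0 ≤ θ) : auxChi θ = 1 := by
  unfold auxChi; rw [max_eq_right (by linarith), min_eq_left (by linarith)]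
lemma aux_chi_zero : auxChi (-1) = 0 := by unfold auxChi; norm_num

/-- weight -/
noncomputable def auxW (t x θ : ℝ) : ℝ≥0∞ := ENNReal.ofReal (auxChi θ * (rTheta θ t x)⁻¹)

lemma aux_wr_cont (t x : ℝ) : Continuous (fun θ => auxChi θ * (rTheta θ t x)⁻¹) :=
  aux_chi_cont.mul ((aux_rTheta_cont t x).inv₀ (fun θ => (aux_rTheta_pos θ t x).ne'))

lemma aux_wr_nonneg (t x θ : ℝ) : 0 ≤ auxChi θ * (rTheta θ t x)⁻¹ :=
  mul_nonneg (aux_chi_nonneg _) (inv_nonneg.2 (aux_rTheta_pos _ _ _).le)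

lemma aux_W_meas (t x : ℝ) : Measurable (auxW t x) :=
  (aux_wr_cont t x).measurable.ennreal_ofReal

/-- the probability measure associated with a feasible measure -/
noncomputable def auxP (t x : ℝ) (μ : Measure ℝ) : Measure ℝ :=
  μ.withDensity (fun θ => ENNReal.ofReal (rTheta θ t x)) + (1 - gInt t x μ) • Measure.dirac (-1)

lemma auxP_univ {t x : ℝ} {μ : Measure ℝ} (h : gInt t x μ ≤ 1) : auxP t x μ univ = 1 := by
  simp only [auxP, Measure.add_apply, Measure.smul_apply, withDensity_apply _ MeasurableSet.univ,
    Measure.restrict_univ, measure_univ, smul_eq_mul, mul_one]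
  exact add_tsub_cancel_of_le h

lemma auxP_withDensity {t x : ℝ} {μ : Measure ℝ} (hs : μ (Iio 0) = 0) :
    (auxP t x μ).withDensity (auxW t x) = μ := by
  unfold auxP
  rw [withDensity_add_measure, withDensity_smul_measure]
  have h1 : (Measure.dirac (-1 : ℝ)).withDensity (auxW t x) = 0 := by
    rw [withDensity_eq_zero_iff (aux_W_meas t x).aemeasurable]
    rw [Filter.EventuallyEq, ae_dirac_iff]
    · simp [auxW, aux_chi_zero]
    · exact (aux_W_meas t x) (measurableSet_singleton 0)
  rw [h1, smul_zero, add_zero, ← withDensity_mul _ (aux_R_meas t x) (aux_W_meas t x)]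
  conv_rhs => rw [← withDensity_one (μ := μ)]
  apply withDensity_congr_ae
  have : ∀ᵐ θ ∂μ, 0 ≤ θ := by
    rw [ae_iff]; convert hs using 2; ext; simp
  filter_upwards [this] with θ hθ
  simp only [Pi.mul_apply, auxW, aux_chi_one hθ, one_mul, Pi.one_apply]
  rw [← ENNReal.ofReal_mul (aux_rTheta_pos _ _ _).le, mul_inv_cancel₀ (aux_rTheta_pos _ _ _).ne']
  simp

lemma auxP_tight {t x B : ℝ} (ht : 0 < t) (hx : x < B) {μ : Measure ℝ}
    (hs : μ (Iio 0) = 0) (hR : rMu μ t B ≤ 1) (N : ℕ) :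
    auxP t x μ (Icc (-1) (N : ℝ))ᶜ ≤ ENNReal.ofReal (Real.exp (-(N * ((B - x) / t)))) := by
  have hm : MeasurableSet (Icc (-1) (N : ℝ))ᶜ := measurableSet_Icc.compl
  have hd : (Measure.dirac (-1 : ℝ)) (Icc (-1) (N : ℝ))ᶜ = 0 := by
    rw [Measure.dirac_apply' _ hm]
    have : (0:ℝ) ≤ N := Nat.cast_nonneg N
    simp; linarith
  simp only [auxP, Measure.add_apply, Measure.smul_apply, hd, smul_zero, add_zero]
  rw [withDensity_apply _ hm]
  refine le_trans ?_ (aux_setlint ht hx hR N (Ioi (N : ℝ)) (fun θ h => le_of_lt h) measurableSet_Ioi)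
  apply lintegral_mono' _ le_rfl
  apply Measure.restrict_mono_ae
  have : ∀ᵐ θ ∂μ, 0 ≤ θ := by
    rw [ae_iff]; convert hs using 2; ext; simp
  filter_upwards [this] with θ hθ h
  have h : θ ∉ Icc (-1) (N : ℝ) := h
  by_contra h3
  exact h ⟨by linarith, not_lt.1 h3⟩

/-- Sequential compactness. -/
lemma aux_compact {t x B : ℝ} (ht : 0 < t) (hx : x < B) (ν : ℕ → Measure ℝ)
    (hs : ∀ n, ν n (Iio 0) = 0) (hR : ∀ n, rMu (ν n) t B ≤ 1) :
    ∃ (φ : ℕ → ℕ) (ν' : Measure ℝ), StrictMono φ ∧ VagueTendsto (fun k => ν (φ k)) ν' ∧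
      Tendsto (fun k => gInt t x (ν (φ k))) atTop (𝓝 (gInt t x ν')) ∧
      ∀ s y, (∀ n, rMu (ν n) s y ≤ 1) → rMu ν' s y ≤ 1 := by
  let P : ℕ → ProbabilityMeasure ℝ := fun n =>
    ⟨auxP t x (ν n), ⟨auxP_univ (aux_gInt_le ht hx (hs n) (hR n))⟩⟩
  have hP : ∀ n, ν n = (P n : Measure ℝ).withDensity (auxW t x) :=
    fun n => (auxP_withDensity (hs n)).symm
  let u : ℕ → ℝ≥0 := fun N => Real.toNNReal (Real.exp (-(N * ((B - x) / t))))
  have hu : Tendsto u atTop (𝓝 0) := by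
    rw [← Real.toNNReal_zero]
    apply (continuous_real_toNNReal.tendsto 0).comp
    apply Real.tendsto_exp_neg_atTop_nhds_zero.comp
    exact tendsto_natCast_atTop_atTop.atTop_mul_const (div_pos (by linarith) ht)
  have hcomp := isCompact_setOfPred_probabilityMeasure_mass_eq_compl_isCompact_le (E := ℝ) hu
    (K := fun N => Icc (-1) (N : ℝ)) (fun N => isCompact_Icc) (Or.inl inferInstance)
  obtain ⟨Q, -, φ, hφ, hlim⟩ := hcomp.tendsto_subseq (x := P) (by
    intro n N
    have := auxP_tight ht hx (hs n) (hR n) N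
    rw [← ENNReal.coe_le_coe, ProbabilityMeasure.ennreal_coeFn_eq_coeFn_toMeasure]
    exact this)
  have hWtop : ∀ θ, auxW t x θ < ∞ := fun θ => ENNReal.ofReal_lt_top
  refine ⟨φ, (Q : Measure ℝ).withDensity (auxW t x), hφ, ?_, ?_, ?_⟩
  · intro f hf hfc
    have hc : Continuous (fun θ => (auxW t x θ).toReal • f θ) := by
      simp only [auxW, ENNReal.toReal_ofReal (aux_wr_nonneg t x _), smul_eq_mul]
      exact (aux_wr_cont t x).mul hf
    have hcs : HasCompactSupport (fun θ => (auxW t x θ).toReal • f θ) := by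
      apply hfc.mono
      intro θ hθ h0
      apply hθ
      change (auxW t x θ).toReal • f θ = 0
      rw [h0, smul_zero]
    obtain ⟨C, hC⟩ := hcs.exists_bound_of_continuous hc
    have := ProbabilityMeasure.tendsto_iff_forall_integral_tendsto.1 hlim
      (BoundedContinuousFunction.ofNormedAddCommGroup _ hc C hC)
    simp only [hP]
    simp_rw [integral_withDensity_eq_integral_toReal_smul (aux_W_meas t x)
      (Eventually.of_forall hWtop)]
    exact this
  · let F : BoundedContinuousFunction ℝ ℝ≥0 :=
      BoundedContinuousFunction.mkOfBound ⟨fun θ => Real.toNNReal (auxChi θ),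
        continuous_real_toNNReal.comp aux_chi_cont⟩ 1 (by
          intro a b
          simp only [ContinuousMap.coe_mk, NNReal.dist_eq,
            Real.coe_toNNReal _ (aux_chi_nonneg _)]
          rw [abs_le]
          have := aux_chi_nonneg a; have := aux_chi_nonneg b
          have := aux_chi_le a; have := aux_chi_le b
          constructor <;> linarith)
    have := ProbabilityMeasure.tendsto_iff_forall_lintegral_tendsto.1 hlim F
    have key : ∀ m : Measure ℝ, gInt t x (m.withDensity (auxW t x)) = ∫⁻ θ, F θ ∂m := by
      intro m
      unfold gInt
      rw [lintegral_withDensity_eq_lintegral_mul _ (aux_W_meas t x) (aux_R_meas t x)]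
      apply lintegral_congr
      intro θ
      simp only [Pi.mul_apply, auxW]
      rw [← ENNReal.ofReal_mul (aux_wr_nonneg t x θ), mul_assoc,
        inv_mul_cancel₀ (aux_rTheta_pos _ _ _).ne', mul_one]
      rfl
    simp only [hP, key]
    exact this
  · intro s y h
    let f : ℝ → ℝ := fun θ => (auxChi θ * (rTheta θ t x)⁻¹) * rTheta θ s y
    have hf : Continuous f := (aux_wr_cont t x).mul (aux_rTheta_cont s y)
    have hf0 : 0 ≤ f := fun θ => mul_nonneg (aux_wr_nonneg t x θ) (aux_rTheta_pos _ _ _).le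
    have key : ∀ m : Measure ℝ, rMu (m.withDensity (auxW t x)) s y =
        ∫⁻ θ, ENNReal.ofReal (f θ) ∂m := by
      intro m
      unfold rMu
      rw [lintegral_withDensity_eq_lintegral_mul _ (aux_W_meas t x) (aux_R_meas s y)]
      apply lintegral_congr
      intro θ
      simp only [Pi.mul_apply, auxW]
      rw [← ENNReal.ofReal_mul (aux_wr_nonneg t x θ)]
    have h3 := lintegral_le_liminf_lintegral_of_forall_isOpen_measure_le_liminf_measure hf hf0
      (μ := (Q : Measure ℝ)) (μs := fun k => ((P (φ k) : ProbabilityMeasure ℝ) : Measure ℝ))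
      (fun G hG => ProbabilityMeasure.le_liminf_measure_open_of_tendsto hlim hG)
    rw [key]
    refine h3.trans ?_
    have h4 : ∀ k, ∫⁻ θ, ENNReal.ofReal (f θ) ∂(P (φ k) : Measure ℝ) ≤ 1 := by
      intro k
      rw [← key, ← hP]; exact h _
    calc _ ≤ atTop.liminf (fun _ : ℕ => (1 : ℝ≥0∞)) :=
          liminf_le_liminf (Eventually.of_forall h4)
      _ = 1 := liminf_const 1

lemma aux_finComp {μ : Measure ℝ} {t B : ℝ} (hR : rMu μ t B ≤ 1) :
    IsFiniteMeasureOnCompacts μ := by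
  constructor
  intro K hK
  rcases K.eq_empty_or_nonempty with rfl | hne
  · simp
  obtain ⟨p, -, hp⟩ := hK.exists_isMinOn hne (aux_rTheta_cont t B).continuousOn
  have h1 : ENNReal.ofReal (rTheta p t B) * μ K ≤ 1 := by
    calc _ = ∫⁻ _ in K, ENNReal.ofReal (rTheta p t B) ∂μ := by simp
      _ ≤ ∫⁻ θ in K, ENNReal.ofReal (rTheta θ t B) ∂μ :=
          setLIntegral_mono' hK.measurableSet (fun θ hθ => ENNReal.ofReal_le_ofReal (hp hθ))
      _ ≤ ∫⁻ θ, ENNReal.ofReal (rTheta θ t B) ∂μ := setLIntegral_le_lintegral _ _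
      _ ≤ 1 := hR
  by_contra h
  rw [not_lt, top_le_iff] at h
  rw [h, ENNReal.mul_top (by simpa using aux_rTheta_pos p t B)] at h1
  simp at h1

lemma aux_vague_cont {f : ℝ → ℝ} (hf : Continuous f) (hc : HasCompactSupport f) :
    @Continuous _ _ vagueTop _ (fun μ : Measure ℝ => ∫ x, f x ∂μ) := by
  refine continuous_iff_le_induced.2 ?_
  unfold vagueTop
  exact iInf_le_of_le f (iInf_le_of_le hf (iInf_le_of_le hc le_rfl))

lemma aux_vague_tendsto {ν : ℕ → Measure ℝ} {ν' : Measure ℝ} (h : VagueTendsto ν ν') :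
    Tendsto ν atTop (@nhds _ vagueTop ν') := by
  unfold vagueTop
  simp only [nhds_iInf, tendsto_iInf, nhds_induced, tendsto_comap_iff]
  intro f hf hc
  exact h f hf hc

lemma aux_closed {μs : ℕ → Measure ℝ} {ν : ℕ → Measure ℝ} {ν' : Measure ℝ}
    (h : VagueTendsto ν ν') (hν : ∀ n, ν n ∈ coneUInf μs) : ν' ∈ coneUInf μs := by
  let _ := vagueTop
  exact isClosed_closure.mem_of_tendsto (aux_vague_tendsto h) (Eventually.of_forall hν)

lemma aux_cone_sub (μs : ℕ → Measure ℝ) (n : ℕ) : coneU μs n ⊆ coneUInf μs := by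
  let _ := vagueTop
  exact (subset_iUnion (fun n => coneU μs n) n).trans subset_closure

lemma aux_cone_supp {μs : ℕ → Measure ℝ} (hs : ∀ i, μs i (Iio 0) = 0) {n : ℕ} {μ : Measure ℝ}
    (h : μ ∈ coneU μs n) : μ (Iio 0) = 0 := by
  obtain ⟨a, rfl⟩ := h
  simp [Measure.finsetSum_apply, hs]

lemma aux_inf_supp {μs : ℕ → Measure ℝ} (hs : ∀ i, μs i (Iio 0) = 0) {μ : Measure ℝ}
    (h : μ ∈ coneUInf μs) {t B : ℝ} (hR : rMu μ t B ≤ 1) : μ (Iio 0) = 0 := by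
  have := aux_finComp hR
  let f : ℕ → ℝ → ℝ := fun k x => max 0 (min (-x) (x + k))
  have hf : ∀ k, Continuous (f k) := fun k => by fun_prop
  have hc : ∀ k, HasCompactSupport (f k) := fun k => by
    apply HasCompactSupport.of_support_subset_isCompact (isCompact_Icc (a := -(k:ℝ)) (b := 0))
    intro x hx
    by_contra h
    apply hx
    apply max_eq_left
    simp only [mem_Icc, not_and_or, not_le] at h
    rcases h with h | h
    · exact (min_le_right _ _).trans (by linarith)
    · exact (min_le_left _ _).trans (by linarith)
  have h0 : ∀ k, ∫ x, f k x ∂μ = 0 := by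
    intro k
    let _ := vagueTop
    have hcl : IsClosed {m : Measure ℝ | ∫ x, f k x ∂m = 0} :=
      isClosed_singleton.preimage (aux_vague_cont (hf k) (hc k))
    have hsub : (⋃ n, coneU μs n) ⊆ {m : Measure ℝ | ∫ x, f k x ∂m = 0} := by
      intro m hm
      obtain ⟨n, hn⟩ := mem_iUnion.1 hm
      have := aux_cone_supp hs hn
      apply integral_eq_zero_of_ae
      have h2 : ∀ᵐ θ ∂m, 0 ≤ θ := by
        rw [ae_iff]; convert this using 2; ext; simp
      filter_upwards [h2] with x hx
      exact max_eq_left ((min_le_left _ _).trans (by linarith))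
    exact closure_minimal hsub hcl h
  have h1 : ∀ k, f k =ᵐ[μ] 0 := fun k =>
    (integral_eq_zero_iff_of_nonneg (fun x => le_max_left _ _)
      ((hf k).integrable_of_hasCompactSupport (hc k))).1 (h0 k)
  have h2 : ∀ᵐ x ∂μ, ∀ k, f k x = 0 := ae_all_iff.2 h1
  rw [ae_iff] at h2
  refine measure_mono_null ?_ h2
  intro x hx h3
  have hx : x < 0 := hx
  obtain ⟨k, hk⟩ := exists_nat_gt (-x)
  have := h3 k
  have h5 : 0 < min (-x) (x + k) := lt_min (by linarith) (by linarith)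
  have h6 : min (-x) (x + k) ≤ f k x := le_max_right _ _
  linarith

lemma aux_rMu_lt_top {μ : Measure ℝ} [IsFiniteMeasure μ] {t : ℝ} (ht : 0 < t) (x : ℝ) :
    rMu μ t x ≠ ∞ := by
  have h : rMu μ t x ≤ ∫⁻ _, ENNReal.ofReal (Real.exp (x ^ 2 / (2 * t))) ∂μ := by
    apply lintegral_mono
    intro θ
    apply ENNReal.ofReal_le_ofReal
    unfold rTheta
    apply Real.exp_le_exp.2
    have : x ^ 2 / (2 * t) - (-θ ^ 2 / (2 * t) + θ * x / t) = (θ - x) ^ 2 / (2 * t) := by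
      field_simp; ring
    have : 0 ≤ (θ - x) ^ 2 / (2 * t) := by positivity
    linarith
  refine ne_top_of_le_ne_top ?_ h
  rw [lintegral_const]
  exact ENNReal.mul_ne_top ENNReal.ofReal_ne_top (measure_ne_top _ _)

lemma aux_rMu_pos {μ : Measure ℝ} (hμ : μ ≠ 0) (t x : ℝ) : rMu μ t x ≠ 0 := by
  unfold rMu
  rw [Ne, lintegral_eq_zero_iff (aux_R_meas t x)]
  intro h
  apply hμ
  rw [← Measure.measure_univ_eq_zero]
  have h : ∀ᵐ θ ∂μ, ENNReal.ofReal (rTheta θ t x) = 0 := h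
  rw [ae_iff] at h
  convert h using 2
  ext θ
  simp [aux_rTheta_pos]

lemma aux_rMu_sum (μs : ℕ → Measure ℝ) (a : ℕ → ℝ≥0) (n : ℕ) (t x : ℝ) :
    rMu (∑ i ∈ Finset.range n, a i • μs i) t x =
      ∑ i ∈ Finset.range n, (a i : ℝ≥0∞) * rMu (μs i) t x := by
  unfold rMu
  rw [lintegral_finsetSum_measure]
  apply Finset.sum_congr rfl
  intro i _
  rw [lintegral_smul_measure]
  rfl

lemma aux_cont_sum (c : ℕ → ℝ≥0∞) (hc : ∀ i, c i ≠ ∞) (n : ℕ) :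
    Continuous (fun a : ℕ → ℝ≥0 => ∑ i ∈ Finset.range n, (a i : ℝ≥0∞) * c i) := by
  apply continuous_finsetSum
  intro i _
  have h1 : Continuous (fun a : ℕ → ℝ≥0 => (a i : ℝ≥0∞)) :=
    ENNReal.continuous_coe.comp (continuous_apply i)
  exact (ENNReal.continuous_mul_const (hc i)).comp h1

lemma aux_fin_exists (b : ℝ → ℝ) (t0 x0 : ℝ) (ht0 : 0 < t0)
    (μs : ℕ → Measure ℝ) (hfin : ∀ i, IsFiniteMeasure (μs i)) (n : ℕ) :
    ∃ μstar ∈ dFeasSet b t0 (coneU μs n), gInt t0 x0 μstar = dVal b t0 x0 (coneU μs n) := by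
  classical
  let M : ℕ → ℝ≥0 := fun i =>
    if i < n ∧ μs i ≠ 0 then ((rMu (μs i) t0 (b t0))⁻¹).toNNReal else 0
  let K : Set (ℕ → ℝ≥0) := Set.pi univ (fun i => Icc 0 (M i))
  let F : Set (ℕ → ℝ≥0) := {a | ∀ t ∈ Ioc 0 t0,
    ∑ i ∈ Finset.range n, (a i : ℝ≥0∞) * rMu (μs i) t (b t) ≤ 1}
  have hK : IsCompact K := isCompact_univ_pi (fun i => isCompact_Icc)
  have hF : IsClosed F := by
    have : F = ⋂ t ∈ Ioc 0 t0, {a : ℕ → ℝ≥0 |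
      ∑ i ∈ Finset.range n, (a i : ℝ≥0∞) * rMu (μs i) t (b t) ≤ 1} := by
      ext a; simp [F]
    rw [this]
    refine isClosed_biInter (fun t ht => ?_)
    exact isClosed_le (aux_cont_sum _ (fun i => aux_rMu_lt_top ht.1 _) n) continuous_const
  have hne : (K ∩ F).Nonempty := ⟨0, fun i _ => ⟨le_rfl, zero_le⟩, fun t _ => by simp⟩
  obtain ⟨a, ha, hmax⟩ := (hK.inter_right hF).exists_isMaxOn hne
    (aux_cont_sum (fun i => rMu (μs i) t0 x0) (fun i => aux_rMu_lt_top ht0 _) n).continuousOn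
  have hafeas : (∑ i ∈ Finset.range n, a i • μs i) ∈ dFeasSet b t0 (coneU μs n) := by
    refine ⟨⟨a, rfl⟩, fun t ht => ?_⟩
    rw [aux_rMu_sum]
    exact ha.2 t ht
  refine ⟨_, hafeas, le_antisymm (le_iSup₂_of_le _ hafeas le_rfl) ?_⟩
  refine iSup₂_le ?_
  rintro μ ⟨⟨c, rfl⟩, hμ⟩
  let c' : ℕ → ℝ≥0 := fun i => if i < n ∧ μs i ≠ 0 then c i else 0
  have hcc : ∑ i ∈ Finset.range n, c i • μs i = ∑ i ∈ Finset.range n, c' i • μs i := by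
    apply Finset.sum_congr rfl
    intro i hi
    by_cases h : μs i = 0
    · simp [h]
    · simp [c', h, Finset.mem_range.1 hi]
  rw [hcc] at hμ ⊢
  have hc' : c' ∈ K ∩ F := by
    constructor
    · intro i _
      refine ⟨zero_le, ?_⟩
      by_cases h : i < n ∧ μs i ≠ 0
      · have h1 := hμ t0 ⟨ht0, le_rfl⟩
        rw [aux_rMu_sum] at h1
        have h2 : (c' i : ℝ≥0∞) * rMu (μs i) t0 (b t0) ≤ 1 :=
          (Finset.single_le_sum (f := fun i => (c' i : ℝ≥0∞) * rMu (μs i) t0 (b t0))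
            (fun _ _ => zero_le) (Finset.mem_range.2 h.1)).trans h1
        have h3 : (c' i : ℝ≥0∞) ≤ (rMu (μs i) t0 (b t0))⁻¹ :=
          ENNReal.le_inv_iff_mul_le.2 h2
        have h4 : (rMu (μs i) t0 (b t0))⁻¹ ≠ ∞ := ENNReal.inv_ne_top.2 (aux_rMu_pos h.2 _ _)
        simp only [M, if_pos h]
        rw [← ENNReal.coe_le_coe, ENNReal.coe_toNNReal h4]
        exact h3
      · simp only [c', if_neg h]; exact zero_le
    · intro t ht
      rw [← aux_rMu_sum]
      exact hμ t ht
  have := hmax hc'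
  change rMu _ t0 x0 ≤ rMu _ t0 x0
  rw [aux_rMu_sum, aux_rMu_sum]
  exact this

theorem stmt_18 (b : ℝ → ℝ)
    (hba : AnalyticOnNhd ℝ b (Set.Ici 0)) (hbconc : ConcaveOn ℝ (Set.Ici 0) b)
    (hb0 : 0 < b 0) (hbderiv : ∃ d : ℝ, HasDerivWithinAt b d (Set.Ici 0) 0)
    (t0 x0 : ℝ) (ht0 : 0 < t0) (hx0 : x0 < b t0)
    (μs : ℕ → Measure ℝ) (hfin : ∀ i, IsFiniteMeasure (μs i))
    (hsupp : ∀ i, μs i (Set.Ici (2 * b 0))ᶜ = 0)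
    (C : ℝ≥0) (hC : 0 < C)
    (hCfeas : ∀ t ∈ Set.Ioc 0 t0, rMu (C • μs 0) t (b t) ≤ 1) :
    -- (a) existence of optimisers for each `n ≥ 1` and for `n = ∞`,
    --     together with monotonicity and the bound by 1
    (∀ n : ℕ, 1 ≤ n → ∃ μstar ∈ dFeasSet b t0 (coneU μs n),
      gInt t0 x0 μstar = dVal b t0 x0 (coneU μs n)) ∧
    (∃ μstar ∈ dFeasSet b t0 (coneUInf μs),
      gInt t0 x0 μstar = dVal b t0 x0 (coneUInf μs)) ∧
    (∀ m n : ℕ, 1 ≤ m → m ≤ n →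
      dVal b t0 x0 (coneU μs m) ≤ dVal b t0 x0 (coneU μs n) ∧
      dVal b t0 x0 (coneU μs n) ≤ 1) ∧
    -- (b) for any sequence of optimisers there is a vaguely convergent
    --     subsequence whose limit is feasible, with the stated value bounds
    (∀ μstar : ℕ → Measure ℝ,
      (∀ n : ℕ, 1 ≤ n → μstar n ∈ dFeasSet b t0 (coneU μs n) ∧
        gInt t0 x0 (μstar n) = dVal b t0 x0 (coneU μs n)) →
      ∃ (nk : ℕ → ℕ) (νInf : Measure ℝ), StrictMono nk ∧ (∀ k, 1 ≤ nk k) ∧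
        νInf ∈ coneUInf μs ∧ (∀ t ∈ Set.Ioc 0 t0, rMu νInf t (b t) ≤ 1) ∧
        VagueTendsto (fun k => μstar (nk k)) νInf ∧
        gInt t0 x0 νInf ≤ dVal b t0 x0 (coneUInf μs) ∧
        (⨆ n : ℕ, dVal b t0 x0 (coneU μs (n + 1))) ≤ gInt t0 x0 νInf ∧
        Tendsto (fun n : ℕ => dVal b t0 x0 (coneU μs (n + 1))) atTop
          (𝓝 (⨆ n : ℕ, dVal b t0 x0 (coneU μs (n + 1))))) := by
  have hs : ∀ i, μs i (Iio 0) = 0 := fun i =>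
    measure_mono_null (fun x hx => by
      have hx : x < 0 := hx
      simp only [mem_compl_iff, mem_Ici, not_le]; linarith) (hsupp i)
  have ht0' : t0 ∈ Ioc 0 t0 := ⟨ht0, le_rfl⟩
  have hmono : ∀ m n : ℕ, m ≤ n →
      dVal b t0 x0 (coneU μs m) ≤ dVal b t0 x0 (coneU μs n) := by
    intro m n hmn
    refine biSup_mono ?_
    rintro μ ⟨⟨a, rfl⟩, h⟩
    refine ⟨⟨fun i => if i < m then a i else 0, ?_⟩, h⟩
    rw [← Finset.sum_subset (Finset.range_subset_range.2 hmn)]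
    · apply Finset.sum_congr rfl
      intro i hi
      simp [Finset.mem_range.1 hi]
    · intro i _ hi
      simp only [Finset.mem_range] at hi
      simp [hi]
  refine ⟨fun n _ => aux_fin_exists b t0 x0 ht0 μs hfin n, ?_, ?_, ?_⟩
  · have hne : (gInt t0 x0 '' dFeasSet b t0 (coneUInf μs)).Nonempty := by
      refine ⟨_, 0, ⟨aux_cone_sub μs 0 ⟨0, by simp⟩, ?_⟩, rfl⟩
      intro t _
      simp [rMu]
    obtain ⟨u, -, hu, humem⟩ := exists_seq_tendsto_sSup hne (OrderTop.bddAbove _)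
    choose ν hν hνu using humem
    obtain ⟨φ, ν', hφ, hvag, hg, hr⟩ := aux_compact ht0 hx0 ν
      (fun n => aux_inf_supp hs (hν n).1 ((hν n).2 t0 ht0')) (fun n => (hν n).2 t0 ht0')
    refine ⟨ν', ⟨aux_closed hvag (fun n => (hν _).1), fun t ht => hr t _ (fun n => (hν n).2 t ht)⟩,
      ?_⟩
    have h1 := hu.comp hφ.tendsto_atTop
    have h2 : (u ∘ φ) = fun k => gInt t0 x0 (ν (φ k)) := by
      funext k; exact (hνu _).symm
    rw [h2] at h1
    rw [tendsto_nhds_unique hg h1, sSup_image]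
    rfl
  · intro m n _ hmn
    refine ⟨hmono m n hmn, iSup₂_le ?_⟩
    intro μ hμ
    exact aux_gInt_le ht0 hx0 (aux_cone_supp hs hμ.1) (hμ.2 t0 ht0')
  · intro μstar hst
    obtain ⟨φ, ν', hφ, hvag, hg, hr⟩ := aux_compact ht0 hx0 (fun n => μstar (n + 1))
      (fun n => aux_cone_supp hs (hst (n + 1) (by omega)).1.1)
      (fun n => (hst (n + 1) (by omega)).1.2 t0 ht0')
    have hmem : ν' ∈ coneUInf μs :=
      aux_closed hvag (fun k => aux_cone_sub μs _ (hst (φ k + 1) (by omega)).1.1)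
    have hfeas : ∀ t ∈ Set.Ioc 0 t0, rMu ν' t (b t) ≤ 1 :=
      fun t ht => hr t _ (fun n => (hst (n + 1) (by omega)).1.2 t ht)
    have hlim : Tendsto (fun n : ℕ => dVal b t0 x0 (coneU μs (n + 1))) atTop
          (𝓝 (⨆ n : ℕ, dVal b t0 x0 (coneU μs (n + 1)))) :=
      tendsto_atTop_iSup (fun m n hmn => hmono _ _ (by omega))
    refine ⟨fun k => φ k + 1, ν', fun a c h => Nat.succ_lt_succ (hφ h), fun k => Nat.succ_pos _, hmem,
      hfeas, hvag, ?_, ?_, hlim⟩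
    · exact le_iSup₂_of_le (f := fun μ (_ : μ ∈ dFeasSet b t0 (coneUInf μs)) => gInt t0 x0 μ)
        ν' ⟨hmem, hfeas⟩ le_rfl
    · have h1 := hlim.comp hφ.tendsto_atTop
      have h2 : (fun k => gInt t0 x0 (μstar (φ k + 1))) =
          (fun n : ℕ => dVal b t0 x0 (coneU μs (n + 1))) ∘ φ := by
        funext k; exact (hst (φ k + 1) (by omega)).2
      rw [← h2] at h1
      exact (tendsto_nhds_unique hg h1).ge
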